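/- Every multigraph G on 4 vertices with exactly 19 edges, maximum edge multiplicity at most 5, and minimum degree at least 8 is strongly Z_7-connected. -/

import Mathlib

/-- The direction of edge `i` under orientation `o`: if `o i = true` the
reference direction is reversed. -/
def edir {V : Type} {m : ℕ} (ends : Fin m → V × V) (o : Fin m → Bool) (i : Fin m) : V × V :=
  if o i then ((ends i).2, (ends i).1) else ends i

/-- Contribution of edge `i` to `d⁺ - d⁻` at vertex `v`, computed in `ZMod n`. -/
def contrib {V : Type} [DecidableEq V] {m : ℕ} (n : ℕ) (ends : Fin m → V × V)
    (o : Fin m → Bool) (i : Fin m) (v : V) : ZMod n :=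
  (if (edir ends o i).1 = v then 1 else 0) - (if (edir ends o i).2 = v then 1 else 0)

/-- `d⁺_D(v) - d⁻_D(v)` in `ZMod n` for the orientation `o` of the multigraph
with edge-endpoint function `ends`. -/
def netDeg {V : Type} [DecidableEq V] {m : ℕ} (n : ℕ) (ends : Fin m → V × V)
    (o : Fin m → Bool) (v : V) : ZMod n :=
  ∑ i : Fin m, contrib n ends o i v

/-!
The out-degree vectors of the orientations of a multigraph form a Minkowski sum: an edge contributes
the pair of its ends, and `m` parallel edges contribute `m` times that pair. For odd `n`, strong
`ZMod n`-connectedness says that this sum contains every vector with the right coordinate sum.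

A triangle with multiplicities below `n` and at least `2 * n - 2` edges has this property because
three arcs of `ZMod n` of total size exceeding `2 * n` meet. With `2 * n - 3` edges and
multiplicities below `n - 1` it misses at most two vectors: all out-degrees equal to `-1`, and all
in-degrees equal to `-1`.

Let `n = 7`, and let `x` be a vertex of minimum degree, which is at most `9`. If the degree is at
most `7`, the edges at `x` meet the demand at `x`, and at least `12` edges remain in the opposite
triangle. If it is `8`, lifting edges `x u` and `x v` to an edge `u v` leaves degree `6` at `x` and
`12` edges in the triangle. If it is `9`, lifting leaves degree `7` and `11` edges. For a nonzero
demand at `x` two ways of meeting it differ by exchanging `u` and `v`, and the triangle does not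
miss both. For demand zero the edges at `x` are all directed inwards or all outwards; if both fail,
the multiplicities satisfy congruences that a suitable choice of the lifted pair avoids.
-/

open scoped Pointwise

/-! ### Out-degree vectors on three and four vertices -/

section

variable {M : Type*} [AddCommMonoid M]

theorem nsmul_add_nsmul_mem_nsmul_pair (x y : M) (i j : ℕ) :
    i • x + j • y ∈ (i + j) • ({x, y} : Set M) := by
  rw [add_nsmul]
  exact Set.add_mem_add (Set.nsmul_mem_nsmul (by simp)) (Set.nsmul_mem_nsmul (by simp))

/-- The out-degree vectors of the orientations of a triangle on `u, v, w` in which `a` edges are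
opposite to `u`, `b` to `v` and `c` to `w`. An edge contributes one of its ends, so the vectors form
a Minkowski sum of pairs; taking elements of `M` for the vertices covers unit vectors over any
ring. -/
def triangleOutdegrees (a b c : ℕ) (u v w : M) : Set M :=
  a • {v, w} + b • {w, u} + c • {u, v}

/-- The out-degree vectors of the orientations of a star with centre `x` in which `a`, `b` and `c`
edges lead to `u`, `v` and `w`. -/
def starOutdegrees (a b c : ℕ) (x u v w : M) : Set M :=
  a • {x, u} + b • {x, v} + c • {x, w}

/-- The out-degree vectors of the orientations of a multigraph on `x, u, v, w` that consists of a
star with centre `x` and the triangle opposite to `x`. The multiplicities `a` and `a'` belong to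
opposite edges, and so do `b, b'` and `c, c'`. -/
def k4Outdegrees (a b c a' b' c' : ℕ) (x u v w : M) : Set M :=
  starOutdegrees a b c x u v w + triangleOutdegrees a' b' c' u v w

theorem triangleOutdegrees_rotate (a b c : ℕ) (u v w : M) :
    triangleOutdegrees b c a v w u = triangleOutdegrees a b c u v w := by
  simp only [triangleOutdegrees]
  abel

theorem triangleOutdegrees_swap (a b c : ℕ) (u v w : M) :
    triangleOutdegrees b a c v u w = triangleOutdegrees a b c u v w := by
  simp only [triangleOutdegrees, Set.pair_comm]
  abel

theorem starOutdegrees_rotate (a b c : ℕ) (x u v w : M) :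
    starOutdegrees b c a x v w u = starOutdegrees a b c x u v w := by
  simp only [starOutdegrees]
  abel

theorem singleton_add_pair_subset (x u v : M) : ({x} + {u, v} : Set M) ⊆ {x, u} + {x, v} := by
  simp only [Set.singleton_add, Set.image_pair, Set.insert_subset_iff, Set.singleton_subset_iff]
  exact ⟨⟨u, by simp, x, by simp, add_comm u x⟩, Set.add_mem_add (by simp) (by simp)⟩

-- Lifting: the edges `x u` and `x v`, traversed as a path, do the work of one edge `u v`.
theorem add_mem_k4Outdegrees_of_lift {a b c a' b' c' : ℕ} {x u v w z : M}
    (hz : z ∈ k4Outdegrees a b c a' b' (c' + 1) x u v w) :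
    x + z ∈ k4Outdegrees (a + 1) (b + 1) c a' b' c' x u v w := by
  have hlifted : {x} + k4Outdegrees a b c a' b' (c' + 1) x u v w =
      ({x} + {u, v}) + k4Outdegrees a b c a' b' c' x u v w := by
    simp only [k4Outdegrees, starOutdegrees, triangleOutdegrees, succ_nsmul]
    abel
  have horiginal : k4Outdegrees (a + 1) (b + 1) c a' b' c' x u v w =
      ({x, u} + {x, v}) + k4Outdegrees a b c a' b' c' x u v w := by
    simp only [k4Outdegrees, starOutdegrees, triangleOutdegrees, succ_nsmul]
    abel
  rw [horiginal]
  exact Set.add_subset_add_right (singleton_add_pair_subset x u v)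
    (hlifted ▸ Set.add_mem_add rfl hz)

end

theorem inter_inter_nonempty_of_two_mul_card_lt {α : Type*} [Fintype α] [DecidableEq α]
    {s t u : Finset α} (h : 2 * Fintype.card α < s.card + t.card + u.card) :
    (s ∩ t ∩ u).Nonempty := by
  apply Finset.inter_nonempty_of_card_lt_card_add_card (Finset.subset_univ _)
    (Finset.subset_univ _)
  have := Finset.card_union_add_card_inter s t
  have := (s ∪ t).card_le_univ
  rw [Finset.card_univ]
  omega

theorem card_image_natCast_range {n m : ℕ} (hm : m < n) :
    ((Finset.range (m + 1)).image (Nat.cast : ℕ → ZMod n)).card = m + 1 := by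
  rw [Finset.card_image_of_injOn, Finset.card_range]
  exact (CharP.natCast_injOn_Iio (ZMod n) n).mono fun k hk ↦ by
    simp only [Finset.coe_range, Set.mem_Iio] at hk ⊢
    omega

theorem exists_triangle_counts {n a b c : ℕ} (ha : a < n) (hb : b < n) (hc : c < n)
    (habc : 2 * n ≤ a + b + c + 2) {p q r : ZMod n} (hpqr : p + q + r = a + b + c) :
    ∃ i i' j j' k k' : ℕ, i + i' = a ∧ j + j' = b ∧ k + k' = c ∧
      p = j' + k ∧ q = i + k' ∧ r = i' + j := by
  have : NeZero n := ⟨by omega⟩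
  let arc (m : ℕ) : Finset (ZMod n) := (Finset.range (m + 1)).image Nat.cast
  have hcard : 2 * Fintype.card (ZMod n) <
      (arc c).card + ((arc b).image (p - ·)).card + ((arc a).image (· + (c - q))).card := by
    rw [Finset.card_image_of_injective _ sub_right_injective,
      Finset.card_image_of_injective _ (add_left_injective _), card_image_natCast_range ha,
      card_image_natCast_range hb, card_image_natCast_range hc, ZMod.card]
    omega
  obtain ⟨_, hmem⟩ := inter_inter_nonempty_of_two_mul_card_lt hcard
  simp only [arc, Finset.mem_inter, Finset.mem_image, Finset.mem_range, Nat.lt_succ_iff,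
    exists_exists_and_eq_and] at hmem
  obtain ⟨⟨⟨k, hk, rfl⟩, j', hj, hpj⟩, i, hi, hqi⟩ := hmem
  obtain ⟨k', rfl⟩ := Nat.exists_eq_add_of_le hk
  obtain ⟨j, rfl⟩ := Nat.exists_eq_add_of_le' hj
  obtain ⟨i', rfl⟩ := Nat.exists_eq_add_of_le hi
  push_cast at hqi hpqr
  exact ⟨i, i', j, j', k, k', rfl, rfl, rfl, by linear_combination hpj,
    by linear_combination -hqi, by linear_combination hpqr + hqi - hpj⟩

section

variable {M : Type*} [AddCommGroup M] {n : ℕ} [Module (ZMod n) M]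

theorem mem_triangleOutdegrees_of_eq {a b c i i' j j' k k' : ℕ} (hi : i + i' = a) (hj : j + j' = b)
    (hk : k + k' = c) (u v w : M) {p q r : ZMod n} (hp : p = j' + k) (hq : q = i + k')
    (hr : r = i' + j) :
    p • u + q • v + r • w ∈ triangleOutdegrees a b c u v w := by
  have hsum : p • u + q • v + r • w =
      (i • v + i' • w) + (j • w + j' • u) + (k • u + k' • v) := by
    simp only [hp, hq, hr, add_smul, Nat.cast_smul_eq_nsmul]
    abel
  subst hi hj hk
  rw [hsum]
  exact Set.add_mem_add (Set.add_mem_add (nsmul_add_nsmul_mem_nsmul_pair v w i i')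
    (nsmul_add_nsmul_mem_nsmul_pair w u j j')) (nsmul_add_nsmul_mem_nsmul_pair u v k k')

theorem mem_starOutdegrees_of_eq {a b c i i' j j' k k' : ℕ} (hi : i + i' = a) (hj : j + j' = b)
    (hk : k + k' = c) (x u v w : M) {t : ZMod n} (ht : t = i + j + k) :
    t • x + (i' : ZMod n) • u + (j' : ZMod n) • v + (k' : ZMod n) • w ∈
      starOutdegrees a b c x u v w := by
  have hsum : t • x + (i' : ZMod n) • u + (j' : ZMod n) • v + (k' : ZMod n) • w =
      (i • x + i' • u) + (j • x + j' • v) + (k • x + k' • w) := by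
    simp only [ht, add_smul, Nat.cast_smul_eq_nsmul]
    abel
  subst hi hj hk
  rw [hsum]
  exact Set.add_mem_add (Set.add_mem_add (nsmul_add_nsmul_mem_nsmul_pair x u i i')
    (nsmul_add_nsmul_mem_nsmul_pair x v j j')) (nsmul_add_nsmul_mem_nsmul_pair x w k k')

theorem mem_triangleOutdegrees {a b c : ℕ} (ha : a < n) (hb : b < n) (hc : c < n)
    (habc : 2 * n ≤ a + b + c + 2) (u v w : M) {p q r : ZMod n}
    (hpqr : p + q + r = a + b + c) :
    p • u + q • v + r • w ∈ triangleOutdegrees a b c u v w := by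
  obtain ⟨i, i', j, j', k, k', hi, hj, hk, hp, hq, hr⟩ :=
    exists_triangle_counts ha hb hc habc hpqr
  exact mem_triangleOutdegrees_of_eq hi hj hk u v w hp hq hr

theorem eq_neg_one_or_of_notMem_triangleOutdegrees {a b c : ℕ} (ha : a < n) (hb : b < n)
    (hc : c + 1 < n) (habc : 2 * n ≤ a + b + c + 3) {u v w : M} {p q r : ZMod n}
    (hpqr : p + q + r = a + b + c)
    (hmem : p • u + q • v + r • w ∉ triangleOutdegrees a b c u v w) :
    p = -1 ∨ q = c + a + 1 := by
  obtain ⟨i, i', j, j', k, k', hi, hj, hk, hp, hq, hr⟩ :=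
    exists_triangle_counts (p := p + 1) (q := q) (r := r) ha hb hc (by omega)
      (by push_cast; linear_combination hpqr)
  contrapose! hmem
  obtain ⟨hp1, hq1⟩ := hmem
  rcases k with - | k
  · -- All edges between `u` and `v` leave `v`: delete one of them and reverse a path `u w v`.
    obtain rfl : k' = c + 1 := by omega
    push_cast at hp hq
    have hj' : j' ≠ 0 := fun h ↦ hp1 (by subst h; push_cast at hp; linear_combination hp)
    have hi' : i' ≠ 0 := fun h ↦ hq1 (by subst h hi; push_cast; linear_combination hq)
    obtain ⟨j', rfl⟩ := Nat.exists_eq_succ_of_ne_zero hj'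
    obtain ⟨i', rfl⟩ := Nat.exists_eq_succ_of_ne_zero hi'
    push_cast at hp hr
    apply mem_triangleOutdegrees_of_eq (i := i + 1) (i' := i') (j := j + 1) (j' := j') (k := 0)
      (k' := c) (by omega) (by omega) (by omega) <;> push_cast
    · linear_combination hp
    · linear_combination hq
    · linear_combination hr
  · push_cast at hp
    exact mem_triangleOutdegrees_of_eq (k := k) (k' := k') hi hj (by omega) u v w
      (by linear_combination hp) hq hr

theorem neg_one_ne_add_add_one {a b c : ℕ} (ha : a + 1 < n) (habc : a + b + c + 3 = 2 * n) :
    (-1 : ZMod n) ≠ b + c + 1 := by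
  intro h
  have habc' : (a + b + c + 3 : ZMod n) = 2 * n := by exact_mod_cast congrArg Nat.cast habc
  have ha0 : ((a + 1 : ℕ) : ZMod n) = 0 := by
    push_cast
    linear_combination habc' + h + 2 * ZMod.natCast_self n
  exact Nat.not_dvd_of_pos_of_lt a.succ_pos ha ((ZMod.natCast_eq_zero_iff _ _).mp ha0)

theorem eq_neg_one_or_and_of_notMem_triangleOutdegrees {a b c : ℕ} (ha : a < n) (hb : b < n)
    (hc : c + 1 < n) (habc : 2 * n ≤ a + b + c + 3) {u v w : M} {p q r : ZMod n}
    (hpqr : p + q + r = a + b + c)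
    (hmem : p • u + q • v + r • w ∉ triangleOutdegrees a b c u v w) :
    (p = -1 ∨ q = c + a + 1) ∧ (q = -1 ∨ p = b + c + 1) := by
  have hswap : q • v + p • u + r • w ∉ triangleOutdegrees b a c v u w := by
    rwa [triangleOutdegrees_swap, add_comm (q • v)]
  refine ⟨eq_neg_one_or_of_notMem_triangleOutdegrees ha hb hc habc hpqr hmem, ?_⟩
  rw [add_comm (b : ZMod n)]
  exact eq_neg_one_or_of_notMem_triangleOutdegrees hb ha hc (by omega)
    (by linear_combination hpqr) hswap

theorem mem_triangleOutdegrees_or_eq {a b c : ℕ} (ha : a + 1 < n) (hb : b + 1 < n)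
    (hc : c + 1 < n) (habc : a + b + c + 3 = 2 * n) (u v w : M) {p q r : ZMod n}
    (hpqr : p + q + r = a + b + c) :
    p • u + q • v + r • w ∈ triangleOutdegrees a b c u v w ∨
      (p = -1 ∧ q = -1 ∧ r = -1) ∨ (p = b + c + 1 ∧ q = c + a + 1 ∧ r = a + b + 1) := by
  refine or_iff_not_imp_left.mpr fun huvw ↦ ?_
  have hvwu : q • v + r • w + p • u ∉ triangleOutdegrees b c a v w u := by
    rwa [triangleOutdegrees_rotate, add_comm, ← add_assoc]
  have hwuv : r • w + p • u + q • v ∉ triangleOutdegrees c a b w u v := by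
    rwa [← triangleOutdegrees_rotate, add_assoc, add_comm]
  have huv := eq_neg_one_or_and_of_notMem_triangleOutdegrees (by omega) (by omega) hc
    (by omega) hpqr huvw
  have hvw := eq_neg_one_or_and_of_notMem_triangleOutdegrees (by omega) (by omega) ha
    (by omega) (by linear_combination hpqr) hvwu
  have hwu := eq_neg_one_or_and_of_notMem_triangleOutdegrees (by omega) (by omega) hb
    (by omega) (by linear_combination hpqr) hwuv
  have hp := neg_one_ne_add_add_one ha habc
  have hq := neg_one_ne_add_add_one (b := c) (c := a) hb (by omega)
  grind

theorem mem_k4Outdegrees_rotate {a b c a' b' c' : ℕ} {x u v w : M} {t p q r : ZMod n} :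
    t • x + q • v + r • w + p • u ∈ k4Outdegrees b c a b' c' a' x v w u ↔
      t • x + p • u + q • v + r • w ∈ k4Outdegrees a b c a' b' c' x u v w := by
  rw [k4Outdegrees, starOutdegrees_rotate, triangleOutdegrees_rotate, k4Outdegrees,
    show t • x + q • v + r • w + p • u = t • x + p • u + q • v + r • w by abel]

theorem mem_k4Outdegrees_of_mem_triangleOutdegrees {a b c i i' j j' k k' a' b' c' : ℕ}
    (hi : i + i' = a) (hj : j + j' = b) (hk : k + k' = c) {x u v w : M} {t p q r : ZMod n}
    (ht : t = i + j + k)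
    (h : (p - i') • u + (q - j') • v + (r - k') • w ∈ triangleOutdegrees a' b' c' u v w) :
    t • x + p • u + q • v + r • w ∈ k4Outdegrees a b c a' b' c' x u v w := by
  have hsplit : t • x + p • u + q • v + r • w =
      (t • x + (i' : ZMod n) • u + (j' : ZMod n) • v + (k' : ZMod n) • w) +
        ((p - i') • u + (q - j') • v + (r - k') • w) := by module
  rw [hsplit]
  exact Set.add_mem_add (mem_starOutdegrees_of_eq hi hj hk x u v w ht) h

theorem exists_le_add_add_eq {a b c s : ℕ} (hs : s ≤ a + b + c) :
    ∃ i i' j j' k k' : ℕ, i + i' = a ∧ j + j' = b ∧ k + k' = c ∧ i + j + k = s :=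
  ⟨min a s, a - s, min b (s - a), b - (s - a), s - a - b, c - (s - a - b), by omega⟩

theorem mem_k4Outdegrees_of_le_star {a b c a' b' c' : ℕ} (hstar : n ≤ a + b + c + 1)
    (ha' : a' < n) (hb' : b' < n) (hc' : c' < n) (htri : 2 * n ≤ a' + b' + c' + 2)
    (x u v w : M) {t p q r : ZMod n} (hsum : t + p + q + r = a + b + c + a' + b' + c') :
    t • x + p • u + q • v + r • w ∈ k4Outdegrees a b c a' b' c' x u v w := by
  have : NeZero n := ⟨by omega⟩
  have ht : t.val < n := t.val_lt
  obtain ⟨i, i', j, j', k, k', rfl, rfl, rfl, hijk⟩ :=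
    exists_le_add_add_eq (show t.val ≤ a + b + c by omega)
  have ht : t = i + j + k := by
    rw [← ZMod.natCast_zmod_val t, ← hijk]
    push_cast
    rfl
  refine mem_k4Outdegrees_of_mem_triangleOutdegrees rfl rfl rfl ht
    (mem_triangleOutdegrees ha' hb' hc' htri u v w ?_)
  push_cast at hsum
  linear_combination hsum - ht

theorem mem_k4Outdegrees_of_lift {a b c a' b' c' : ℕ} (ha : 1 ≤ a) (hb : 1 ≤ b) {x u v w : M}
    {t p q r : ZMod n} (h : (t - 1) • x + p • u + q • v + r • w ∈
      k4Outdegrees (a - 1) (b - 1) c a' b' (c' + 1) x u v w) :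
    t • x + p • u + q • v + r • w ∈ k4Outdegrees a b c a' b' c' x u v w := by
  obtain ⟨a, rfl⟩ := Nat.exists_eq_add_of_le' ha
  obtain ⟨b, rfl⟩ := Nat.exists_eq_add_of_le' hb
  rw [show t • x + p • u + q • v + r • w =
    x + ((t - 1) • x + p • u + q • v + r • w) by module]
  exact add_mem_k4Outdegrees_of_lift h

theorem mem_k4Outdegrees_of_ne_zero {a b c a' b' c' : ℕ} (ha : 1 ≤ a) (hb : 1 ≤ b)
    (hstar : a + b + c = n) (ha' : a' + 1 < n) (hb' : b' + 1 < n) (hc' : c' + 1 < n)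
    (htri : a' + b' + c' + 3 = 2 * n) (x u v w : M) {t p q r : ZMod n} (ht : t ≠ 0)
    (hsum : t + p + q + r = a' + b' + c') :
    t • x + p • u + q • v + r • w ∈ k4Outdegrees a b c a' b' c' x u v w := by
  have : Fact (1 < n) := ⟨by omega⟩
  have htpos : 0 < t.val := ZMod.val_pos.mpr ht
  have htn : t.val < n := t.val_lt
  obtain ⟨i, i', j, j', k, k', hi, hj, hk, hijk⟩ :=
    exists_le_add_add_eq (show t.val - 1 ≤ (a - 1) + (b - 1) + c by omega)
  have ht : t = i + j + k + 1 := by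
    rw [← ZMod.natCast_zmod_val t, show t.val = i + j + k + 1 by omega]
    push_cast
    rfl
  have hn : ((i + i' + (j + j') + (k + k') + 2 : ℕ) : ZMod n) = 0 := by
    rw [show i + i' + (j + j') + (k + k') + 2 = n by omega, ZMod.natCast_self]
  by_contra hmem
  -- One more edge has to leave `x`; it may go to `u` or to `v`.
  have hu : (p - (i' : ℕ)) • u + (q - (j' + 1 : ℕ)) • v + (r - k') • w ∉
      triangleOutdegrees a' b' c' u v w := fun h ↦ hmem <|
    mem_k4Outdegrees_of_mem_triangleOutdegrees (i := i + 1) (j := j) (by omega) (by omega) hk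
      (by push_cast; linear_combination ht) h
  have hv : (p - (i' + 1 : ℕ)) • u + (q - (j' : ℕ)) • v + (r - k') • w ∉
      triangleOutdegrees a' b' c' u v w := fun h ↦ hmem <|
    mem_k4Outdegrees_of_mem_triangleOutdegrees (i := i) (j := j + 1) (by omega) (by omega) hk
      (by push_cast; linear_combination ht) h
  push_cast at hn hu hv
  have hu' := (mem_triangleOutdegrees_or_eq ha' hb' hc' htri u v w
    (by linear_combination hsum - ht - hn)).resolve_left hu
  have hv' := (mem_triangleOutdegrees_or_eq ha' hb' hc' htri u v w
    (by linear_combination hsum - ht - hn)).resolve_left hv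
  have hw := neg_one_ne_add_add_one (b := a') (c := b') hc' (by omega)
  rcases hu' with ⟨hpu, -, hru⟩ | ⟨hpu, -, hru⟩ <;> rcases hv' with ⟨hpv, -, hrv⟩ | ⟨hpv, -, hrv⟩
  · exact one_ne_zero (by linear_combination hpu - hpv)
  · exact hw (hru.symm.trans hrv)
  · exact hw (hrv.symm.trans hru)
  · exact one_ne_zero (by linear_combination hpu - hpv)

/-- The exceptional multiplicities for which a star of `n` edges and a triangle of `2 * n - 3` edges
may fail to realise an out-degree vector that vanishes at the centre of the star: directing the
star inwards leaves the triangle with a missed demand, and so does directing it outwards. The first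
alternative says that the three other vertices have degree `-2` modulo `n`. -/
def IsExceptional (n a b c a' b' c' : ℕ) : Prop :=
  (a + b' + c' + 2 ≡ 0 [MOD n] ∧ b + c' + a' + 2 ≡ 0 [MOD n] ∧ c + a' + b' + 2 ≡ 0 [MOD n]) ∨
    (b' + c' + 2 ≡ a [MOD n] ∧ c' + a' + 2 ≡ b [MOD n] ∧ a' + b' + 2 ≡ c [MOD n])

theorem mem_k4Outdegrees_of_not_isExceptional {a b c a' b' c' : ℕ} (ha : 1 ≤ a) (hb : 1 ≤ b)
    (hstar : a + b + c = n) (ha' : a' + 1 < n) (hb' : b' + 1 < n) (hc' : c' + 1 < n)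
    (htri : a' + b' + c' + 3 = 2 * n) (hexc : ¬ IsExceptional n a b c a' b' c') (x u v w : M)
    {p q r : ZMod n} (hsum : p + q + r = a' + b' + c') :
    (0 : ZMod n) • x + p • u + q • v + r • w ∈ k4Outdegrees a b c a' b' c' x u v w := by
  by_contra hmem
  have hn : ((a + b + c : ℕ) : ZMod n) = 0 := by rw [hstar, ZMod.natCast_self]
  push_cast at hn
  have hin : (p - a) • u + (q - b) • v + (r - c) • w ∉ triangleOutdegrees a' b' c' u v w :=
    fun h ↦ hmem <| mem_k4Outdegrees_of_mem_triangleOutdegrees (zero_add a) (zero_add b)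
      (zero_add c) (by simp) h
  have hout : p • u + q • v + r • w ∉ triangleOutdegrees a' b' c' u v w :=
    fun h ↦ hmem <| mem_k4Outdegrees_of_mem_triangleOutdegrees (add_zero a) (add_zero b)
      (add_zero c) hn.symm (by simpa using h)
  have hin' := (mem_triangleOutdegrees_or_eq ha' hb' hc' htri u v w
    (by linear_combination hsum - hn)).resolve_left hin
  have hout' := (mem_triangleOutdegrees_or_eq ha' hb' hc' htri u v w hsum).resolve_left hout
  have ha0 : (a : ZMod n) ≠ 0 := by
    rw [Ne, ZMod.natCast_eq_zero_iff]
    exact Nat.not_dvd_of_pos_of_lt ha (by omega)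
  simp only [IsExceptional, ← ZMod.natCast_eq_natCast_iff] at hexc
  push_cast at hexc
  rcases hin' with ⟨hpi, hqi, hri⟩ | ⟨hpi, hqi, hri⟩ <;>
    rcases hout' with ⟨hpo, hqo, hro⟩ | ⟨hpo, hqo, hro⟩
  · exact ha0 (by linear_combination hpo - hpi)
  · exact hexc (.inr ⟨by linear_combination hpi - hpo, by linear_combination hqi - hqo,
      by linear_combination hri - hro⟩)
  · exact hexc (.inl ⟨by linear_combination hpo - hpi, by linear_combination hqo - hqi,
      by linear_combination hro - hri⟩)
  · exact ha0 (by linear_combination hpo - hpi)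

theorem mem_k4Outdegrees_of_lift_of_le_star {a b c a' b' c' : ℕ} (ha : 1 ≤ a) (hb : 1 ≤ b)
    (hstar : n + 1 ≤ a + b + c) (ha' : a' < n) (hb' : b' < n) (hc' : c' + 1 < n)
    (htri : 2 * n ≤ a' + b' + c' + 3) (x u v w : M) {t p q r : ZMod n}
    (hsum : t + p + q + r = a + b + c + a' + b' + c') :
    t • x + p • u + q • v + r • w ∈ k4Outdegrees a b c a' b' c' x u v w := by
  refine mem_k4Outdegrees_of_lift ha hb (mem_k4Outdegrees_of_le_star (by omega) ha' hb' hc'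
    (by omega) x u v w ?_)
  push_cast [ha, hb]
  linear_combination hsum

theorem mem_k4Outdegrees_of_lift_of_not_isExceptional {a b c a' b' c' : ℕ} (ha : 2 ≤ a)
    (hb : 2 ≤ b) (hstar : a + b + c = n + 2) (ha' : a' + 1 < n) (hb' : b' + 1 < n)
    (hc' : c' + 2 < n) (htri : a' + b' + c' + 4 = 2 * n)
    (hexc : ¬ IsExceptional n (a - 1) (b - 1) c a' b' (c' + 1)) (x u v w : M)
    {t p q r : ZMod n} (hsum : t + p + q + r = a + b + c + a' + b' + c') :
    t • x + p • u + q • v + r • w ∈ k4Outdegrees a b c a' b' c' x u v w := by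
  have ha1 : 1 ≤ a := by omega
  have hb1 : 1 ≤ b := by omega
  have hn : ((a + b + c : ℕ) : ZMod n) = 2 := by simp [hstar]
  have hlifted : (t - 1) + p + q + r = a' + b' + (c' + 1 : ℕ) := by
    push_cast at hn ⊢
    linear_combination hsum + hn
  apply mem_k4Outdegrees_of_lift ha1 hb1
  by_cases ht : t - 1 = 0
  · rw [ht] at hlifted ⊢
    exact mem_k4Outdegrees_of_not_isExceptional (by omega) (by omega) (by omega) ha' hb' hc'
      (by omega) hexc x u v w (by linear_combination hlifted)
  · exact mem_k4Outdegrees_of_ne_zero (by omega) (by omega) (by omega) ha' hb' hc' (by omega)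
      x u v w ht hlifted

end

theorem not_isExceptional_seven {a b c a' b' c' : ℕ} (hstar : a + b + c = 9)
    (htri : a' + b' + c' = 10) (hu : 9 ≤ a + b' + c') (hv : 9 ≤ b + c' + a')
    (hw : 9 ≤ c + a' + b') (hne : ¬ (a + a' = 7 ∧ b + b' = 7)) :
    ¬ IsExceptional 7 (a - 1) (b - 1) c a' b' (c' + 1) := by
  rintro (⟨hdeg, -⟩ | ⟨hu', hv', -⟩)
  · unfold Nat.ModEq at hdeg
    omega
  · unfold Nat.ModEq at hu' hv'
    have haa' : a + a' = 7 ∨ a + a' = 14 := by omega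
    have hbb' : b + b' = 7 ∨ b + b' = 14 := by omega
    omega

section

variable {M : Type*} [AddCommGroup M] [Module (ZMod 7) M]

theorem mem_k4Outdegrees_of_degree_eq_eight {a b c a' b' c' : ℕ} (ha : a ≤ 5) (hb : b ≤ 5)
    (hc : c ≤ 5) (ha' : a' ≤ 5) (hb' : b' ≤ 5) (hc' : c' ≤ 5) (hstar : a + b + c = 8)
    (htri : a' + b' + c' = 11) (x u v w : M) {t p q r : ZMod 7}
    (hsum : t + p + q + r = a + b + c + a' + b' + c') :
    t • x + p • u + q • v + r • w ∈ k4Outdegrees a b c a' b' c' x u v w := by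
  have hpair : (1 ≤ a ∧ 1 ≤ b) ∨ (1 ≤ b ∧ 1 ≤ c) ∨ (1 ≤ c ∧ 1 ≤ a) := by omega
  rcases hpair with ⟨ha0, hb0⟩ | ⟨hb0, hc0⟩ | ⟨hc0, ha0⟩
  · exact mem_k4Outdegrees_of_lift_of_le_star ha0 hb0 (by omega) (by omega) (by omega) (by omega)
      (by omega) x u v w hsum
  · rw [← mem_k4Outdegrees_rotate]
    exact mem_k4Outdegrees_of_lift_of_le_star hb0 hc0 (by omega) (by omega) (by omega) (by omega)
      (by omega) x v w u (by linear_combination hsum)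
  · rw [mem_k4Outdegrees_rotate.symm.trans mem_k4Outdegrees_rotate.symm]
    exact mem_k4Outdegrees_of_lift_of_le_star hc0 ha0 (by omega) (by omega) (by omega) (by omega)
      (by omega) x w u v (by linear_combination hsum)

theorem mem_k4Outdegrees_of_degree_eq_nine {a b c a' b' c' : ℕ} (ha' : a' ≤ 5)
    (hb' : b' ≤ 5) (hc' : c' ≤ 5) (hstar : a + b + c = 9) (htri : a' + b' + c' = 10)
    (hu : 9 ≤ a + b' + c') (hv : 9 ≤ b + c' + a') (hw : 9 ≤ c + a' + b') (x u v w : M)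
    {t p q r : ZMod 7} (hsum : t + p + q + r = a + b + c + a' + b' + c') :
    t • x + p • u + q • v + r • w ∈ k4Outdegrees a b c a' b' c' x u v w := by
  have hpair : (2 ≤ a ∧ 2 ≤ b ∧ c' ≤ 4 ∧ ¬ (a + a' = 7 ∧ b + b' = 7)) ∨
      (2 ≤ b ∧ 2 ≤ c ∧ a' ≤ 4 ∧ ¬ (b + b' = 7 ∧ c + c' = 7)) ∨
      (2 ≤ c ∧ 2 ≤ a ∧ b' ≤ 4 ∧ ¬ (c + c' = 7 ∧ a + a' = 7)) := by omega
  rcases hpair with ⟨ha2, hb2, hc4, hne⟩ | ⟨hb2, hc2, ha4, hne⟩ | ⟨hc2, ha2, hb4, hne⟩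
  · exact mem_k4Outdegrees_of_lift_of_not_isExceptional ha2 hb2 (by omega) (by omega) (by omega)
      (by omega) (by omega) (not_isExceptional_seven (by omega) (by omega) hu hv hw hne)
      x u v w hsum
  · rw [← mem_k4Outdegrees_rotate]
    exact mem_k4Outdegrees_of_lift_of_not_isExceptional hb2 hc2 (by omega) (by omega) (by omega)
      (by omega) (by omega) (not_isExceptional_seven (by omega) (by omega) hv hw hu hne)
      x v w u (by linear_combination hsum)
  · rw [mem_k4Outdegrees_rotate.symm.trans mem_k4Outdegrees_rotate.symm]
    exact mem_k4Outdegrees_of_lift_of_not_isExceptional hc2 ha2 (by omega) (by omega) (by omega)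
      (by omega) (by omega) (not_isExceptional_seven (by omega) (by omega) hw hu hv hne)
      x w u v (by linear_combination hsum)

theorem mem_k4Outdegrees_seven {a b c a' b' c' : ℕ} (ha : a ≤ 5) (hb : b ≤ 5)
    (hc : c ≤ 5) (ha' : a' ≤ 5) (hb' : b' ≤ 5) (hc' : c' ≤ 5)
    (hedges : a + b + c + (a' + b' + c') = 19) (hx : 6 ≤ a + b + c)
    (hu : a + b + c ≤ a + b' + c') (hv : a + b + c ≤ b + c' + a')
    (hw : a + b + c ≤ c + a' + b') (x u v w : M) {t p q r : ZMod 7} (hsum : t + p + q + r = 19) :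
    t • x + p • u + q • v + r • w ∈ k4Outdegrees a b c a' b' c' x u v w := by
  have hcast := congrArg (Nat.cast : ℕ → ZMod 7) hedges
  push_cast at hcast
  have hsum' : t + p + q + r = a + b + c + a' + b' + c' := by linear_combination hsum - hcast
  have hdegree : a + b + c ≤ 7 ∨ a + b + c = 8 ∨ a + b + c = 9 := by omega
  rcases hdegree with h | h | h
  · exact mem_k4Outdegrees_of_le_star (by omega) (by omega) (by omega) (by omega) (by omega)
      x u v w hsum'
  · exact mem_k4Outdegrees_of_degree_eq_eight ha hb hc ha' hb' hc' h (by omega) x u v w hsum'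
  · exact mem_k4Outdegrees_of_degree_eq_nine ha' hb' hc' h (by omega) (by omega)
      (by omega) (by omega) x u v w hsum'

end

/-! ### Multigraphs -/

theorem exists_nodup_of_card_eq_four {V : Type*} [Fintype V] (hV : Fintype.card V = 4) (x : V) :
    ∃ u v w, [x, u, v, w].Nodup ∧ ∀ y, y ∈ [x, u, v, w] := by
  classical
  obtain ⟨u, v, w, huvw⟩ : ∃ u v w, (Finset.univ.erase x).toList = [u, v, w] :=
    List.length_eq_three.mp (by simp [Finset.card_erase_of_mem, hV])
  refine ⟨u, v, w, huvw ▸ ?_, fun y ↦ huvw ▸ ?_⟩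
  · simp [Finset.nodup_toList]
  · simp [em]

theorem sum_univ_of_nodup_of_mem {V N : Type*} [Fintype V] [AddCommMonoid N] {x u v w : V}
    (hnodup : [x, u, v, w].Nodup) (hmem : ∀ y, y ∈ [x, u, v, w]) (f : V → N) :
    ∑ y, f y = f x + f u + f v + f w := by
  classical
  have huniv : Finset.univ = [x, u, v, w].toFinset := by ext y; simpa using hmem y
  rw [huniv, List.sum_toFinset _ hnodup]
  simp [add_assoc]

theorem eq_sum_smul_single {V R : Type*} [DecidableEq V] [Semiring R] {x u v w : V}
    (hnodup : [x, u, v, w].Nodup) (hmem : ∀ y, y ∈ [x, u, v, w]) (τ : V → R) :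
    τ = τ x • Pi.single x 1 + τ u • Pi.single u 1 + τ v • Pi.single v 1 + τ w • Pi.single w 1 := by
  let _ : Fintype V := ⟨[x, u, v, w].toFinset, by simpa using hmem⟩
  conv_lhs => rw [pi_eq_sum_univ' τ, sum_univ_of_nodup_of_mem hnodup hmem]

section

variable {V : Type} [DecidableEq V] {m n : ℕ} {ends : Fin m → V × V}

/-- The number of edges of a multigraph that join two given vertices. -/
def edgeMultiplicity (ends : Fin m → V × V) (u v : V) : ℕ :=
  (Finset.univ.filter fun i ↦ ends i = (u, v) ∨ ends i = (v, u)).card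

/-- The number of edges of a multigraph at a given vertex; it is the degree since loops are
excluded wherever it is used. -/
def edgeDegree (ends : Fin m → V × V) (v : V) : ℕ :=
  (Finset.univ.filter fun i ↦ (ends i).1 = v ∨ (ends i).2 = v).card

/-- The out-degree vectors, modulo `n`, of the orientations of a multigraph. -/
def outdegrees (n : ℕ) (ends : Fin m → V × V) : Set (V → ZMod n) :=
  ∑ i, {Pi.single (ends i).1 1, Pi.single (ends i).2 1}

theorem exists_netDeg_eq_of_mem_outdegrees {τ : V → ZMod n} (hτ : τ ∈ outdegrees n ends) :
    ∃ o : Fin m → Bool, ∀ v, netDeg n ends o v =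
      2 * τ v - ∑ i, (Pi.single (ends i).1 1 + Pi.single (ends i).2 1 : V → ZMod n) v := by
  classical
  obtain ⟨tail, htail, rfl⟩ := (Set.mem_fintype_sum _ _).mp hτ
  refine ⟨fun i ↦ decide (tail i ≠ Pi.single (ends i).1 1), fun v ↦ ?_⟩
  have hsingle (y : V) : (Pi.single y 1 : V → ZMod n) v = if y = v then 1 else 0 := by
    simp only [Pi.single_apply, eq_comm]
  simp only [netDeg, Finset.sum_apply, Finset.mul_sum, ← Finset.sum_sub_distrib]
  refine Finset.sum_congr rfl fun i _ ↦ ?_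
  by_cases hi : tail i = Pi.single (ends i).1 1
  · simp only [contrib, edir, hi, ne_eq, not_true, decide_false, Bool.false_eq_true, if_false,
      Pi.add_apply, hsingle]
    ring
  · have hi' : tail i = Pi.single (ends i).2 1 := (htail i).resolve_left hi
    simp only [contrib, edir, hi, ne_eq, not_false_eq_true, decide_true, if_true, Pi.add_apply]
    simp only [hi', hsingle]
    ring

theorem exists_netDeg_eq_of_forall_mem_outdegrees [Fintype V] (hn : Odd n)
    (h : ∀ τ : V → ZMod n, ∑ v, τ v = m → τ ∈ outdegrees n ends) {β : V → ZMod n}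
    (hβ : ∑ v, β v = 0) : ∃ o : Fin m → Bool, ∀ v, netDeg n ends o v = β v := by
  obtain ⟨k, hk⟩ := hn
  have hhalf : 2 * (k + 1 : ZMod n) = 1 := by
    have hn0 : ((2 * k + 1 : ℕ) : ZMod n) = 0 := by rw [← hk, ZMod.natCast_self]
    push_cast at hn0
    linear_combination hn0
  let d (v : V) : ZMod n := ∑ i, (Pi.single (ends i).1 1 + Pi.single (ends i).2 1 : V → ZMod n) v
  have hd : ∑ v, d v = 2 * m := by
    rw [Finset.sum_comm]
    simp [Finset.sum_add_distrib, mul_comm, one_add_one_eq_two]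
  obtain ⟨o, ho⟩ := exists_netDeg_eq_of_mem_outdegrees (h (fun v ↦ (k + 1) * (β v + d v)) (by
    rw [← Finset.mul_sum, Finset.sum_add_distrib, hβ, hd]
    linear_combination m * hhalf))
  exact ⟨o, fun v ↦ (ho v).trans (by linear_combination (β v + d v) * hhalf)⟩

theorem sum_ends_eq_sum_edgeMultiplicity {N : Type*} [AddCommMonoid N]
    (hloopless : ∀ i, (ends i).1 ≠ (ends i).2) {x u v w : V} (hnodup : [x, u, v, w].Nodup)
    (hmem : ∀ y, y ∈ [x, u, v, w]) {f : V → V → N} (hf : ∀ y z, f y z = f z y) :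
    ∑ i, f (ends i).1 (ends i).2 =
      edgeMultiplicity ends x u • f x u + edgeMultiplicity ends x v • f x v +
        edgeMultiplicity ends x w • f x w + (edgeMultiplicity ends v w • f v w +
        edgeMultiplicity ends w u • f w u + edgeMultiplicity ends u v • f u v) := by
  let pair (i : Fin m) : Sym2 V := s((ends i).1, (ends i).2)
  let pairs : Finset (Sym2 V) := {s(x, u), s(x, v), s(x, w), s(v, w), s(w, u), s(u, v)}
  have hmaps (i : Fin m) : pair i ∈ pairs := by
    have hne := hloopless i
    have hfst := hmem (ends i).1
    have hsnd := hmem (ends i).2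
    simp only [pair, pairs, List.mem_cons, List.not_mem_nil, or_false, Finset.mem_insert,
      Finset.mem_singleton, Sym2.eq_iff] at hfst hsnd ⊢
    grind
  have hfiber (y z : V) :
      (Finset.univ.filter fun i ↦ pair i = s(y, z)).card = edgeMultiplicity ends y z := by
    simp only [pair, edgeMultiplicity, Sym2.eq_iff, Prod.ext_iff]
  have hsum := Finset.sum_fiberwise_of_maps_to' (s := Finset.univ) (fun i _ ↦ hmaps i)
    (Sym2.lift ⟨f, hf⟩)
  have hpairs : [s(x, u), s(x, v), s(x, w), s(v, w), s(w, u), s(u, v)].Nodup := by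
    simp only [List.nodup_cons, List.mem_cons, List.not_mem_nil, Sym2.eq_iff] at hnodup ⊢
    grind
  have hpairs' : pairs = [s(x, u), s(x, v), s(x, w), s(v, w), s(w, u), s(u, v)].toFinset := by
    simp [pairs]
  rw [hpairs', List.sum_toFinset _ hpairs] at hsum
  simp only [Finset.sum_const, hfiber, List.map_cons, List.map_nil, List.sum_cons, List.sum_nil,
    Sym2.lift_mk, add_zero] at hsum
  simpa only [pair, Sym2.lift_mk, add_assoc] using hsum.symm

theorem edgeMultiplicity_comm (ends : Fin m → V × V) (u v : V) :
    edgeMultiplicity ends u v = edgeMultiplicity ends v u := by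
  simp only [edgeMultiplicity, or_comm]

theorem edgeDegree_eq_sum_edgeMultiplicity (hloopless : ∀ i, (ends i).1 ≠ (ends i).2)
    {x u v w : V} (hnodup : [x, u, v, w].Nodup) (hmem : ∀ y, y ∈ [x, u, v, w]) :
    edgeDegree ends x =
      edgeMultiplicity ends x u + edgeMultiplicity ends x v + edgeMultiplicity ends x w := by
  rw [edgeDegree, Finset.card_filter, sum_ends_eq_sum_edgeMultiplicity hloopless hnodup hmem
    (f := fun y z ↦ if y = x ∨ z = x then 1 else 0) (fun y z ↦ by simp only [or_comm])]
  simp only [List.nodup_cons, List.mem_cons, List.not_mem_nil, or_false, not_or] at hnodup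
  grind

theorem outdegrees_eq_k4Outdegrees (hloopless : ∀ i, (ends i).1 ≠ (ends i).2) {x u v w : V}
    (hnodup : [x, u, v, w].Nodup) (hmem : ∀ y, y ∈ [x, u, v, w]) :
    outdegrees n ends = k4Outdegrees
      (edgeMultiplicity ends x u) (edgeMultiplicity ends x v) (edgeMultiplicity ends x w)
      (edgeMultiplicity ends v w) (edgeMultiplicity ends w u) (edgeMultiplicity ends u v)
      (Pi.single x 1) (Pi.single u 1) (Pi.single v 1) (Pi.single w 1) := by
  let f (y z : V) : Set (V → ZMod n) := {Pi.single y 1, Pi.single z 1}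
  exact sum_ends_eq_sum_edgeMultiplicity hloopless hnodup hmem (f := f)
    fun _ _ ↦ Set.pair_comm _ _

theorem mem_outdegrees_seven [Fintype V] (hV : Fintype.card V = 4) {ends : Fin 19 → V × V}
    (hloopless : ∀ i, (ends i).1 ≠ (ends i).2)
    (hmult : ∀ u v, u ≠ v → edgeMultiplicity ends u v ≤ 5) (hdeg : ∀ v, 6 ≤ edgeDegree ends v)
    {τ : V → ZMod 7} (hτ : ∑ v, τ v = 19) : τ ∈ outdegrees 7 ends := by
  have : Nonempty V := Fintype.card_pos_iff.mp (by omega)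
  obtain ⟨x, hmin⟩ := Finite.exists_min (edgeDegree ends)
  obtain ⟨u, v, w, hnodup, hmem⟩ := exists_nodup_of_card_eq_four hV x
  have hedges := sum_ends_eq_sum_edgeMultiplicity hloopless hnodup hmem (f := fun _ _ ↦ 1)
    fun _ _ ↦ rfl
  have hx := edgeDegree_eq_sum_edgeMultiplicity hloopless hnodup hmem
  have hu := edgeDegree_eq_sum_edgeMultiplicity hloopless (x := u) (u := x) (v := w) (w := v)
    (by grind) (fun y ↦ by have hy := hmem y; grind)
  have hv := edgeDegree_eq_sum_edgeMultiplicity hloopless (x := v) (u := x) (v := u) (w := w)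
    (by grind) (fun y ↦ by have hy := hmem y; grind)
  have hw := edgeDegree_eq_sum_edgeMultiplicity hloopless (x := w) (u := x) (v := v) (w := u)
    (by grind) (fun y ↦ by have hy := hmem y; grind)
  simp only [Finset.sum_const, Finset.card_univ, Fintype.card_fin, smul_eq_mul, mul_one] at hedges
  rw [edgeMultiplicity_comm ends u x, edgeMultiplicity_comm ends u w] at hu
  rw [edgeMultiplicity_comm ends v x, edgeMultiplicity_comm ends v u] at hv
  rw [edgeMultiplicity_comm ends w x, edgeMultiplicity_comm ends w v] at hw
  have hminu := hmin u
  have hminv := hmin v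
  have hminw := hmin w
  have hdegx := hdeg x
  rw [outdegrees_eq_k4Outdegrees hloopless hnodup hmem, eq_sum_smul_single hnodup hmem τ]
  rw [sum_univ_of_nodup_of_mem hnodup hmem] at hτ
  simp only [List.nodup_cons, List.mem_cons, List.not_mem_nil, or_false, not_or] at hnodup
  obtain ⟨⟨hxu, hxv, hxw⟩, ⟨huv, huw⟩, hvw, -⟩ := hnodup
  exact mem_k4Outdegrees_seven (hmult _ _ hxu) (hmult _ _ hxv) (hmult _ _ hxw) (hmult _ _ hvw)
    (hmult _ _ (Ne.symm huw)) (hmult _ _ huv) (by omega) (by omega) (by omega) (by omega)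
    (by omega) _ _ _ _ hτ

theorem four_vertex_19_edges_strongly_Z7_connected_general [Fintype V] (hV : Fintype.card V = 4)
    (ends : Fin 19 → V × V) (hloopless : ∀ i, (ends i).1 ≠ (ends i).2)
    (hmult : ∀ u v, u ≠ v →
      (Finset.univ.filter fun i ↦ ends i = (u, v) ∨ ends i = (v, u)).card ≤ 5)
    (hdeg : ∀ v, 6 ≤ (Finset.univ.filter fun i ↦ (ends i).1 = v ∨ (ends i).2 = v).card)
    (β : V → ZMod 7) (hβ : ∑ v, β v = 0) :
    ∃ o : Fin 19 → Bool, ∀ v, netDeg 7 ends o v = β v :=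
  exists_netDeg_eq_of_forall_mem_outdegrees (by decide)
    (fun _ hτ ↦ mem_outdegrees_seven hV hloopless hmult hdeg (by exact_mod_cast hτ)) hβ

end

theorem four_vertex_19_edges_strongly_Z7_connected
    (ends : Fin 19 → Fin 4 × Fin 4)
    (hloopless : ∀ i, (ends i).1 ≠ (ends i).2)
    (hmult : ∀ u v : Fin 4, u ≠ v →
      (Finset.univ.filter (fun i => ends i = (u, v) ∨ ends i = (v, u))).card ≤ 5)
    (hdeg : ∀ v : Fin 4,
      8 ≤ (Finset.univ.filter (fun i => (ends i).1 = v ∨ (ends i).2 = v)).card)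
    (β : Fin 4 → ZMod 7) (hβ : ∑ v : Fin 4, β v = 0) :
    ∃ o : Fin 19 → Bool, ∀ v : Fin 4, netDeg 7 ends o v = β v := by
  exact four_vertex_19_edges_strongly_Z7_connected_general (Fintype.card_fin 4) ends hloopless
    hmult (fun v ↦ le_trans (by norm_num) (hdeg v)) β hβ
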